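/- Let V be a finite-dimensional real vector space, ω a linear symplectic form on V, and v, w ∈ V linearly independent vectors with ω(v, w) = 0. Then there exists a complex structure J on V compatible with ω such that ω(v, J w) = 0, ω(J v, w) = 0 and ω(J v, J w) = 0; that is, the planes spanned by {v, J v} and by {w, J w} are ω-orthogonal. -/

import Mathlib

/-- A linear symplectic form: an alternating, nondegenerate bilinear form. -/
def IsSymplecticForm {V : Type*} [AddCommGroup V] [Module ℝ V]
    (ω : V →ₗ[ℝ] V →ₗ[ℝ] ℝ) : Prop :=
  (∀ v, ω v v = 0) ∧ ∀ v, v ≠ 0 → ∃ w, ω v w ≠ 0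

/-- A complex structure: a linear endomorphism with `J ∘ J = -id`. -/
def IsComplexStructure {V : Type*} [AddCommGroup V] [Module ℝ V]
    (J : V →ₗ[ℝ] V) : Prop :=
  ∀ v, J (J v) = -v

/-- `J` is compatible with `ω`: tamed by `ω` and `ω(Ju, Jv) = ω(u, v)`. -/
def CompatibleWith {V : Type*} [AddCommGroup V] [Module ℝ V]
    (ω : V →ₗ[ℝ] V →ₗ[ℝ] ℝ) (J : V →ₗ[ℝ] V) : Prop :=
  (∀ v, v ≠ 0 → 0 < ω v (J v)) ∧ ∀ u v, ω (J u) (J v) = ω u v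

theorem IsSymplecticForm.apply_swap {V : Type*} [AddCommGroup V] [Module ℝ V]
    {ω : V →ₗ[ℝ] V →ₗ[ℝ] ℝ} (hω : IsSymplecticForm ω) (x y : V) : ω x y = -ω y x := by
  have h := hω.1 (x + y)
  simp only [map_add, LinearMap.add_apply, hω.1] at h
  linarith

/-- The symplectic complement of the plane spanned by `e` and `f`. -/
def planeComplement {V : Type*} [AddCommGroup V] [Module ℝ V]
    (ω : V →ₗ[ℝ] V →ₗ[ℝ] ℝ) (e f : V) : Submodule ℝ V :=
  LinearMap.ker (ω e) ⊓ LinearMap.ker (ω f)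

theorem mem_planeComplement {V : Type*} [AddCommGroup V] [Module ℝ V]
    {ω : V →ₗ[ℝ] V →ₗ[ℝ] ℝ} {e f x : V} :
    x ∈ planeComplement ω e f ↔ ω e x = 0 ∧ ω f x = 0 := by
  simp [planeComplement]

/-- A vector minus its component in the hyperbolic plane spanned by `e` and `f` lies in the
symplectic complement of that plane. -/
theorem IsSymplecticForm.sub_sub_mem_planeComplement {V : Type*} [AddCommGroup V] [Module ℝ V]
    {ω : V →ₗ[ℝ] V →ₗ[ℝ] ℝ} (hω : IsSymplecticForm ω) {e f : V} (hef : ω e f = 1) (x : V) :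
    x + ω f x • e - ω e x • f ∈ planeComplement ω e f := by
  have hfe : ω f e = -1 := by rw [hω.apply_swap, hef]
  simp [mem_planeComplement, hω.1, hef, hfe]

/-- The restriction of a symplectic form to the complement of a hyperbolic plane is symplectic. -/
theorem IsSymplecticForm.domRestrict_planeComplement {V : Type*} [AddCommGroup V] [Module ℝ V]
    {ω : V →ₗ[ℝ] V →ₗ[ℝ] ℝ} (hω : IsSymplecticForm ω) {e f : V} (hef : ω e f = 1) :
    IsSymplecticForm (ω.domRestrict₁₂ (planeComplement ω e f) (planeComplement ω e f)) := by
  refine ⟨fun x => hω.1 x, fun x hx => ?_⟩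
  obtain ⟨y, hy⟩ := hω.2 x (by simpa using hx)
  refine ⟨⟨_, hω.sub_sub_mem_planeComplement hef y⟩, ?_⟩
  obtain ⟨h1, h2⟩ := mem_planeComplement.1 x.2
  have h3 : ω x e = 0 := by rw [hω.apply_swap, h1, neg_zero]
  have h4 : ω x f = 0 := by rw [hω.apply_swap, h2, neg_zero]
  change ω x (y + ω f y • e - ω e y • f) ≠ 0
  simpa [h3, h4] using hy

/-- A compatible complex structure on the complement of a hyperbolic plane extends to the whole
space so as to send `e` to `f`. -/
theorem IsSymplecticForm.exists_extend_compatible {V : Type*} [AddCommGroup V] [Module ℝ V]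
    {ω : V →ₗ[ℝ] V →ₗ[ℝ] ℝ} (hω : IsSymplecticForm ω) {e f : V} (hef : ω e f = 1)
    {K : planeComplement ω e f →ₗ[ℝ] planeComplement ω e f} (hK : IsComplexStructure K)
    (hωK : CompatibleWith
      (ω.domRestrict₁₂ (planeComplement ω e f) (planeComplement ω e f)) K) :
    ∃ J : V →ₗ[ℝ] V, IsComplexStructure J ∧ CompatibleWith ω J ∧ J e = f := by
  have hfe : ω f e = -1 := by rw [hω.apply_swap, hef]
  let p : V →ₗ[ℝ] planeComplement ω e f :=
    (LinearMap.id + (ω f).smulRight e - (ω e).smulRight f).codRestrict _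
      (hω.sub_sub_mem_planeComplement hef)
  have hp : ∀ x, (p x : V) = x + ω f x • e - ω e x • f := fun x => rfl
  have hpe : p e = 0 := Subtype.ext (by simp [hp, hfe, hω.1])
  have hpf : p f = 0 := Subtype.ext (by simp [hp, hef, hω.1])
  have hpW : ∀ x : planeComplement ω e f, p x = x := fun x => Subtype.ext (by
    obtain ⟨h1, h2⟩ := mem_planeComplement.1 x.2
    simp [hp, h1, h2])
  have he : ∀ x : planeComplement ω e f, ω e x = 0 := fun x => (mem_planeComplement.1 x.2).1
  have hf : ∀ x : planeComplement ω e f, ω f x = 0 := fun x => (mem_planeComplement.1 x.2).2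
  have he' : ∀ x : planeComplement ω e f, ω x e = 0 := fun x => by
    rw [hω.apply_swap, he, neg_zero]
  have hf' : ∀ x : planeComplement ω e f, ω x f = 0 := fun x => by
    rw [hω.apply_swap, hf, neg_zero]
  let J : V →ₗ[ℝ] V :=
    (planeComplement ω e f).subtype ∘ₗ K ∘ₗ p - (ω f).smulRight f - (ω e).smulRight e
  have hJ : ∀ x, J x = K (p x) - ω f x • f - ω e x • e := fun x => rfl
  have hdecomp : ∀ x : V, ∃ (a b : ℝ) (y : planeComplement ω e f), x = a • e + b • f + y :=
    fun x => ⟨-ω f x, ω e x, p x, by rw [hp]; module⟩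
  have hJd : ∀ (a b : ℝ) (y : planeComplement ω e f),
      J (a • e + b • f + y) = (-b) • e + a • f + K y := fun a b y => by
    simp only [hJ, map_add, map_smul, hpe, hpf, hpW, he, hf, hef, hfe, hω.1, smul_eq_mul,
      smul_zero, zero_add]
    module
  have hωd : ∀ (a b c d : ℝ) (y z : planeComplement ω e f),
      ω (a • e + b • f + y) (c • e + d • f + z) = a * d - b * c + ω y z := fun a b c d y z => by
    simp only [map_add, map_smul, LinearMap.add_apply, LinearMap.smul_apply, he, hf, he', hf',
      hef, hfe, hω.1, smul_eq_mul]
    ring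
  refine ⟨J, fun x => ?_, ⟨fun x hx => ?_, fun x x' => ?_⟩, ?_⟩
  · obtain ⟨a, b, y, rfl⟩ := hdecomp x
    rw [hJd, hJd, hK, Submodule.coe_neg]
    module
  · obtain ⟨a, b, y, rfl⟩ := hdecomp x
    rw [hJd, hωd]
    by_cases hy : y = 0
    · subst hy
      have hab : a ≠ 0 ∨ b ≠ 0 := by
        by_contra! h
        simp [h.1, h.2] at hx
      simp only [map_zero, Submodule.coe_zero, add_zero]
      rcases hab with h | h <;> have := mul_self_pos.2 h <;> nlinarith [sq_nonneg a, sq_nonneg b]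
    · have h : 0 < ω y (K y) := hωK.1 y hy
      nlinarith [sq_nonneg a, sq_nonneg b]
  · obtain ⟨a, b, y, rfl⟩ := hdecomp x
    obtain ⟨c, d, z, rfl⟩ := hdecomp x'
    have h : ω (K y) (K z) = ω y z := hωK.2 y z
    rw [hJd, hJd, hωd, hωd, h]
    ring
  · simp [hJ, hpe, hfe, hω.1]

/-- Every symplectic form on a finite-dimensional space admits a compatible complex structure. -/
theorem IsSymplecticForm.exists_compatible {V : Type*} [AddCommGroup V] [Module ℝ V]
    [FiniteDimensional ℝ V] {ω : V →ₗ[ℝ] V →ₗ[ℝ] ℝ} (hω : IsSymplecticForm ω) :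
    ∃ J : V →ₗ[ℝ] V, IsComplexStructure J ∧ CompatibleWith ω J := by
  induction hn : Module.finrank ℝ V using Nat.strong_induction_on generalizing V with
  | _ n ih =>
    subst hn
    rcases subsingleton_or_nontrivial V with hV | hV
    · exact ⟨0, fun x => Subsingleton.elim _ _,
        fun x hx => (hx (Subsingleton.elim _ _)).elim,
        fun x y => by rw [Subsingleton.elim x 0]; simp⟩
    · obtain ⟨e, he⟩ := exists_ne (0 : V)
      obtain ⟨g, hg⟩ := hω.2 e he
      have hef : ω e ((ω e g)⁻¹ • g) = 1 := by simp [hg]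
      have hlt : planeComplement ω e ((ω e g)⁻¹ • g) < ⊤ := by
        refine lt_top_iff_ne_top.2 fun h => hg ?_
        exact (mem_planeComplement.1 (h ▸ Submodule.mem_top : g ∈ planeComplement ω e _)).1
      obtain ⟨K, hK, hωK⟩ := ih _ (Submodule.finrank_lt hlt.ne)
        (hω.domRestrict_planeComplement hef) rfl
      obtain ⟨J, hJ, hωJ, -⟩ := hω.exists_extend_compatible hef hK hωK
      exact ⟨J, hJ, hωJ⟩

/-- On a finite-dimensional space every linear functional is represented by a symplectic form. -/
theorem IsSymplecticForm.surjective {V : Type*} [AddCommGroup V] [Module ℝ V]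
    [FiniteDimensional ℝ V] {ω : V →ₗ[ℝ] V →ₗ[ℝ] ℝ} (hω : IsSymplecticForm ω) :
    Function.Surjective ω := by
  refine (LinearMap.injective_iff_surjective_of_finrank_eq_finrank
    (Subspace.dual_finrank_eq (K := ℝ) (V := V)).symm).1 ?_
  refine (injective_iff_map_eq_zero ω).2 fun x hx => ?_
  by_contra h
  obtain ⟨y, hy⟩ := hω.2 x h
  simp [hx] at hy

theorem LinearIndependent.exists_dual_eq_one_eq_zero {V : Type*} [AddCommGroup V] [Module ℝ V]
    {v w : V} (hvw : LinearIndependent ℝ ![v, w]) : ∃ φ : V →ₗ[ℝ] ℝ, φ v = 1 ∧ φ w = 0 := by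
  obtain ⟨g, hg⟩ := LinearMap.exists_leftInverse_of_injective
    (Fintype.linearCombination ℝ ![v, w])
    (LinearMap.ker_eq_bot.2 hvw.fintypeLinearCombination_injective)
  have h : ∀ c, g (Fintype.linearCombination ℝ ![v, w] c) = c := fun c => LinearMap.congr_fun hg c
  have hv := h ![1, 0]
  have hw := h ![0, 1]
  simp only [Fintype.linearCombination_apply, Fin.sum_univ_two] at hv hw
  exact ⟨LinearMap.proj 0 ∘ₗ g, by simpa using congrFun hv 0, by simpa using congrFun hw 0⟩

theorem exists_compatible_complex_structure_orthogonal_planes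
    {V : Type*} [AddCommGroup V] [Module ℝ V] [FiniteDimensional ℝ V]
    (ω : V →ₗ[ℝ] V →ₗ[ℝ] ℝ) (hω : IsSymplecticForm ω)
    (v w : V) (hvw : LinearIndependent ℝ ![v, w]) (hperp : ω v w = 0) :
    ∃ J : V →ₗ[ℝ] V, IsComplexStructure J ∧ CompatibleWith ω J ∧
      ω v (J w) = 0 ∧ ω (J v) w = 0 ∧ ω (J v) (J w) = 0 := by
  obtain ⟨φ, hv, hw⟩ := hvw.exists_dual_eq_one_eq_zero
  obtain ⟨u, rfl⟩ := hω.surjective φ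
  have hef : ω v (-u) = 1 := by rw [map_neg, ← hω.apply_swap, hv]
  obtain ⟨K, hK, hωK⟩ := (hω.domRestrict_planeComplement hef).exists_compatible
  obtain ⟨J, hJ, hωJ, hJv⟩ := hω.exists_extend_compatible hef hK hωK
  have hJvw : ω (J v) w = 0 := by simp [hJv, hw]
  refine ⟨J, hJ, hωJ, ?_, hJvw, by rw [hωJ.2, hperp]⟩
  rw [← hωJ.2, hJ, map_neg, hJvw, neg_zero]
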